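/- For any n ∈ ℕ, the set {x^{♯n} : x ∈ ℝ} ⊆ ℝ^n (words consisting of one real value repeated n times) is gap-rich with empty exceptional set. -/

import Mathlib

open Set MeasureTheory BoundedContinuousFunction

noncomputable section

/-- ℓ²(ℤ; ℝ). -/
abbrev Ell2 : Type := lp (fun _ : ℤ => ℝ) 2

/-- Spectrum of the discrete Schrödinger operator `H_W = Δ + W` on `ℓ²(ℤ)`:
`E` lies in the spectrum iff `H_W - E` is not a linear bijection of `ℓ²(ℤ)`
(for bounded `W`, by the open mapping theorem this is equivalent to `H_W - E`
not being boundedly invertible). -/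
def SchrodingerSpectrum (W : ℤ → ℝ) : Set ℝ :=
  {E : ℝ | ¬ ∃ T : Ell2 ≃ₗ[ℝ] Ell2,
      ∀ f : Ell2, ∀ n : ℤ,
        (T f) n = f (n - 1) + f (n + 1) + (W n - E) * f n}

/-- A Cantor set of zero Hausdorff dimension: nonempty, compact, without isolated
points, with empty interior, and of Hausdorff dimension zero. -/
def IsZeroDimCantor (s : Set ℝ) : Prop :=
  s.Nonempty ∧ IsCompact s ∧ Preperfect s ∧ interior s = ∅ ∧ dimH s = 0

/-- Periodic bounded sequences. -/
def IsPeriodicSeq {α : Type*} [PseudoMetricSpace α] (W : ℤ →ᵇ α) : Prop :=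
  ∃ q : ℕ, 0 < q ∧ ∀ n : ℤ, W (n + q) = W n

/-- The limit-periodic functions `ℤ → ℝ`: uniform limits of periodic functions. -/
def LPZ : Set (ℤ →ᵇ ℝ) := closure {W : ℤ →ᵇ ℝ | IsPeriodicSeq W}

/-- A subset of ℝ is discrete if it has no accumulation points. -/
def IsDiscreteSet (S : Set ℝ) : Prop := ∀ x : ℝ, ¬ AccPt x (Filter.principal S)

/-- Periodic extension `w^{♯ℤ}` of a finite word `w`. -/
def perExt {α : Type*} [Zero α] {m : ℕ} (w : Fin m → α) : ℤ → α :=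
  fun n =>
    if h : 0 < m then
      w ⟨(n % (m : ℤ)).toNat, by
        have h1 : 0 ≤ n % (m : ℤ) := Int.emod_nonneg n (by exact_mod_cast h.ne')
        have h2 : n % (m : ℤ) < (m : ℤ) := Int.emod_lt_of_pos n (by exact_mod_cast h)
        omega⟩
    else 0

/-- Aggregation `y^♮` of a sequence of blocks in `ℝ^k` into a potential `ℤ → ℝ`. -/
def agg (k : ℕ) (x : ℤ → (Fin k → ℝ)) : ℤ → ℝ :=
  fun n =>
    if h : 0 < k then
      x (Int.fdiv n k) ⟨(n % (k : ℤ)).toNat, by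
        have h1 : 0 ≤ n % (k : ℤ) := Int.emod_nonneg n (by exact_mod_cast h.ne')
        have h2 : n % (k : ℤ) < (k : ℤ) := Int.emod_lt_of_pos n (by exact_mod_cast h)
        omega⟩
    else 0

/-- `Y ⊆ ℝ^k` is gap-rich with exceptional set `S`: `S` is discrete and near any
word over `Y` there is a word over `Y` whose periodic Schrödinger operator has a
gap at any prescribed energy `E ∉ S`. -/
def GapRich (k : ℕ) (Y : Set (Fin k → ℝ)) (S : Set ℝ) : Prop :=
  IsDiscreteSet S ∧
  ∀ E : ℝ, E ∉ S → ∀ m : ℕ, 0 < m → ∀ x : Fin m → (Fin k → ℝ), (∀ i, x i ∈ Y) →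
    ∀ ε : ℝ, 0 < ε →
      ∃ l : ℕ, 0 < l ∧ ∃ y : Fin l → (Fin k → ℝ),
        (∀ i, y i ∈ Y) ∧
        (∀ j : ℤ, dist (perExt x j) (perExt y j) < ε) ∧
        E ∉ SchrodingerSpectrum (agg k (perExt y))

/-- The periodic elements of `Y^ℤ`. -/
def PerY (k : ℕ) (Y : Set (Fin k → ℝ)) : Set (ℤ →ᵇ (Fin k → ℝ)) :=
  {x | IsPeriodicSeq x ∧ ∀ n : ℤ, x n ∈ Y}

/-- The limit-periodic elements of `Y^ℤ`: uniform limits of periodic elements. -/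
def LPY (k : ℕ) (Y : Set (Fin k → ℝ)) : Set (ℤ →ᵇ (Fin k → ℝ)) := closure (PerY k Y)

/-!
Shifting the potential by `s` amounts to shifting the energy by `s`. As polynomials in `s`, the
discriminant of the monodromy of a word and an entry of its commutator with a fixed matrix do not
vanish, so arbitrarily small shifts make the monodromy hyperbolic or produce two noncommuting
elliptic monodromies. An elliptic matrix lies in a compact subgroup of `SL(2, ℝ)`, so its inverse is
a limit of its positive powers; as the commutator of two noncommuting elliptic matrices has trace
`> 2`, some product of positive powers of the two is hyperbolic. Concatenating the shifted copies of
the word realizes this product as a monodromy.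

A hyperbolic monodromy with trace `c` puts `E` in the resolvent set: there is an operator `A` with
`A (H - E) = c - (S ^ L + S ^ (-L))`, where `S` is the translation and `L` the period. The right
side is invertible because `|c| > 2`, and `H - E` is self-adjoint.
-/

open scoped MatrixGroups

section TransferMatrix

variable {R : Type*} [CommRing R]

/-- The one-step transfer matrix `T(v, E)` as a function of `a = E - v`. -/
def stepMatrix (a : R) : SL(2, R) :=
  ⟨!![a, -1; 1, 0], by simp⟩

@[simp]
lemma coe_stepMatrix (a : R) : (stepMatrix a : Matrix (Fin 2) (Fin 2) R) = !![a, -1; 1, 0] := rfl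

/-- The transfer matrix over the first `k` sites, where `t i` stands for `E - V i`. -/
def transferMatrix (t : ℕ → R) : ℕ → SL(2, R)
  | 0 => 1
  | k + 1 => stepMatrix (t k) * transferMatrix t k

@[simp]
lemma transferMatrix_zero (t : ℕ → R) : transferMatrix t 0 = 1 := rfl

lemma transferMatrix_succ (t : ℕ → R) (k : ℕ) :
    transferMatrix t (k + 1) = stepMatrix (t k) * transferMatrix t k := rfl

@[simp]
lemma transferMatrix_succ_zero (t : ℕ → R) (k : ℕ) (j : Fin 2) :
    transferMatrix t (k + 1) 0 j = t k * transferMatrix t k 0 j - transferMatrix t k 1 j := by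
  simp [transferMatrix_succ, Matrix.mul_apply, sub_eq_add_neg]

@[simp]
lemma transferMatrix_succ_one (t : ℕ → R) (k : ℕ) (j : Fin 2) :
    transferMatrix t (k + 1) 1 j = transferMatrix t k 0 j := by
  simp [transferMatrix_succ, Matrix.mul_apply]

lemma transferMatrix_congr {t t' : ℕ → R} {k : ℕ} (h : ∀ i < k, t i = t' i) :
    transferMatrix t k = transferMatrix t' k := by
  induction k with
  | zero => rfl
  | succ k ih =>
    rw [transferMatrix_succ, transferMatrix_succ, h k k.lt_succ_self,
      ih fun i hi => h i (hi.trans k.lt_succ_self)]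

lemma transferMatrix_add (t : ℕ → R) (j k : ℕ) :
    transferMatrix t (j + k) = transferMatrix (fun i => t (j + i)) k * transferMatrix t j := by
  induction k with
  | zero => simp
  | succ k ih => rw [← add_assoc, transferMatrix_succ, ih, transferMatrix_succ, mul_assoc]

lemma map_transferMatrix {S : Type*} [CommRing S] (φ : R →+* S) (t : ℕ → R) (k : ℕ) :
    Matrix.SpecialLinearGroup.map φ (transferMatrix t k) = transferMatrix (fun i => φ (t i)) k := by
  have map_stepMatrix (a : R) :
      Matrix.SpecialLinearGroup.map φ (stepMatrix a) = stepMatrix (φ a) := by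
    ext i j
    fin_cases i <;> fin_cases j <;> simp
  induction k with
  | zero => simp
  | succ k ih => rw [transferMatrix_succ, map_mul, map_stepMatrix, ih, transferMatrix_succ]

lemma trace_transferMatrix_translate {t : ℤ → R} {L : ℕ} (ht : t.Periodic (L : ℤ)) (n : ℤ) :
    (transferMatrix (fun i => t (n + i)) L).val.trace =
      (transferMatrix (fun i => t i) L).val.trace := by
  have trace_succ : Function.Periodic
      (fun n : ℤ => (transferMatrix (fun i => t (n + i)) L).val.trace) 1 := by
    intro n
    have conj : transferMatrix (fun i => t (n + 1 + i)) L =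
        stepMatrix (t n) * transferMatrix (fun i => t (n + i)) L * (stepMatrix (t n))⁻¹ := by
      rw [eq_mul_inv_iff_mul_eq, ← ht n, ← transferMatrix_succ (fun i => t (n + i)), add_comm L,
        transferMatrix_add, transferMatrix_succ, transferMatrix_zero, mul_one, ht n]
      simp [add_assoc]
    simp only [conj, Matrix.SpecialLinearGroup.coe_mul]
    rw [Matrix.trace_mul_comm, ← mul_assoc, ← Matrix.SpecialLinearGroup.coe_mul, inv_mul_cancel,
      Matrix.SpecialLinearGroup.coe_one, one_mul]
  simpa using trace_succ.int_mul_eq n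

/-- `f` solves the Schrödinger equation `f (k + 1) + f (k - 1) = t k • f k`. The values of `f` may
lie in any module, which allows solutions consisting of operators modulo an ideal. -/
def IsSchrodingerSolution {N : Type*} [AddCommGroup N] [Module R N] (t : ℤ → R) (f : ℤ → N) :
    Prop :=
  ∀ k, f (k + 1) + f (k - 1) = t k • f k

namespace IsSchrodingerSolution

variable {N : Type*} [AddCommGroup N] [Module R N] {t : ℤ → R} {f : ℤ → N}

lemma eq_transferMatrix_smul (hf : IsSchrodingerSolution t f) (n : ℤ) (k : ℕ) :
    let M := transferMatrix (fun i => t (n + i)) k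
    f (n + k) = M 0 0 • f n + M 0 1 • f (n - 1) ∧
      f (n + k - 1) = M 1 0 • f n + M 1 1 • f (n - 1) := by
  induction k with
  | zero => simp
  | succ k ih =>
    obtain ⟨ih₀, ih₁⟩ := ih
    have next : f (n + k + 1) = t (n + k) • f (n + k) - f (n + k - 1) :=
      eq_sub_of_add_eq (hf (n + k))
    refine ⟨?_, ?_⟩
    · rw [Nat.cast_succ, ← add_assoc, next, ih₀, ih₁]
      simp only [transferMatrix_succ_zero]
      module
    · rw [Nat.cast_succ, ← add_assoc, add_sub_cancel_right, ih₀]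
      simp only [transferMatrix_succ_one]

/-- The monodromy matrix `M` satisfies `M + M⁻¹ = (tr M) • 1` by Cayley-Hamilton; read off on
solutions, this relates the two translates of `f` by a period. -/
lemma apply_period_add_apply_neg_period (hf : IsSchrodingerSolution t f) {L : ℕ}
    (ht : t.Periodic (L : ℤ)) :
    f L + f (-L) = (transferMatrix (fun i => t i) L).val.trace • f 0 := by
  have forward := hf.eq_transferMatrix_smul 0 L
  have backward := hf.eq_transferMatrix_smul (-L) L
  have hM : (fun i : ℕ => t (-L + i)) = fun i : ℕ => t i := by
    funext i
    rw [← ht, neg_add_cancel_comm]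
  rw [hM] at backward
  simp only [zero_add, neg_add_cancel, zero_sub] at forward backward
  set M := transferMatrix (fun i => t i) L
  have hdet : M 0 0 * M 1 1 - M 0 1 * M 1 0 = 1 := (Matrix.det_fin_two M.val).symm.trans M.det_coe
  have hback : M 1 1 • f 0 - M 0 1 • f (-1) = f (-L) :=
    calc M 1 1 • f 0 - M 0 1 • f (-1)
      _ = (M 0 0 * M 1 1 - M 0 1 * M 1 0) • f (-L) := by
        rw [backward.1, backward.2]
        module
      _ = f (-L) := by rw [hdet, one_smul]
  rw [forward.1, ← hback, Matrix.trace_fin_two]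
  module

end IsSchrodingerSolution

end TransferMatrix

lemma periodic_map_emod {α : Type*} {f : ℤ → α} {c : ℤ} (hf : f.Periodic c) (n : ℤ) :
    f (n % c) = f n := by
  simpa [Int.emod_def, mul_comm c] using hf.sub_int_mul_eq (x := n) (n / c)

section SchrodingerOperator

/-- The translate `n ↦ w (n + k)` of a bounded potential. -/
def shiftPotential (k : ℤ) (w : ℤ →ᵇ ℝ) : ℤ →ᵇ ℝ :=
  w.compContinuous ⟨(· + k), continuous_of_discreteTopology⟩

@[simp]
lemma shiftPotential_apply (k : ℤ) (w : ℤ →ᵇ ℝ) (n : ℤ) : shiftPotential k w n = w (n + k) := rfl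

lemma memℓp_comp_equiv (f : Ell2) (e : ℤ ≃ ℤ) : Memℓp (fun n => f (e n)) 2 :=
  memℓp_gen <| ((memℓp_gen_iff (by norm_num)).mp (lp.memℓp f)).comp_injective e.injective

/-- The translation `f ↦ f (· + k)` as an isometry of `ℓ²(ℤ)`. -/
def shiftIsometry (k : ℤ) : Ell2 ≃ₗᵢ[ℝ] Ell2 where
  toFun f := ⟨fun n => f (n + k), memℓp_comp_equiv f (Equiv.addRight k)⟩
  invFun f := ⟨fun n => f (n + -k), memℓp_comp_equiv f (Equiv.addRight (-k))⟩
  map_add' _ _ := rfl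
  map_smul' _ _ := rfl
  left_inv f := by
    ext n
    exact congrArg f (neg_add_cancel_right n k)
  right_inv f := by
    ext n
    exact congrArg f (add_neg_cancel_right n k)
  norm_map' f := by
    have two_pos : 0 < (2 : ENNReal).toReal := by norm_num
    rw [lp.norm_eq_tsum_rpow two_pos, lp.norm_eq_tsum_rpow two_pos]
    congr 1
    exact (Equiv.addRight k).tsum_eq fun n => ‖f n‖ ^ (2 : ENNReal).toReal

/-- The translation `f ↦ f (· + k)` as an element of the algebra of bounded operators. -/
def shiftOp (k : ℤ) : Ell2 →L[ℝ] Ell2 := (shiftIsometry k : Ell2 →L[ℝ] Ell2)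

@[simp]
lemma shiftOp_apply (k : ℤ) (f : Ell2) (n : ℤ) : shiftOp k f n = f (n + k) := rfl

lemma shiftOp_mul (j k : ℤ) : shiftOp j * shiftOp k = shiftOp (j + k) := by
  ext f n
  simp [add_assoc]

lemma shiftOp_zero : shiftOp 0 = 1 := by
  ext f n
  simp

lemma star_shiftOp (k : ℤ) : star (shiftOp k) = shiftOp (-k) := by
  rw [ContinuousLinearMap.star_eq_adjoint, shiftOp, LinearIsometryEquiv.adjoint_eq_symm]
  rfl

lemma norm_shiftOp_le (k : ℤ) : ‖shiftOp k‖ ≤ 1 :=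
  (shiftIsometry k).toLinearIsometry.norm_toContinuousLinearMap_le

/-- The multiplication operators on `ℓ²(ℤ)`. -/
def mulOp : (ℤ →ᵇ ℝ) →ₐ[ℝ] (Ell2 →L[ℝ] Ell2) where
  toFun w := lp.mapCLM 2 (fun n => ContinuousLinearMap.mul ℝ ℝ (w n)) (norm_nonneg w) fun n => by
    simpa using w.norm_coe_le_norm n
  map_one' := by
    ext f n
    simp
  map_mul' v w := by
    ext f n
    simp [mul_assoc]
  map_zero' := by
    ext f n
    simp
  map_add' v w := by
    ext f n
    simp
  commutes' c := by
    ext f n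
    simp [Algebra.algebraMap_eq_smul_one]

@[simp]
lemma mulOp_apply (w : ℤ →ᵇ ℝ) (f : Ell2) (n : ℤ) : mulOp w f n = w n * f n := rfl

lemma shiftOp_mul_mulOp (k : ℤ) (w : ℤ →ᵇ ℝ) :
    shiftOp k * mulOp w = mulOp (shiftPotential k w) * shiftOp k := by
  ext f n
  simp

lemma isSelfAdjoint_mulOp (w : ℤ →ᵇ ℝ) : IsSelfAdjoint (mulOp w) := by
  rw [ContinuousLinearMap.isSelfAdjoint_iff_isSymmetric]
  intro f g
  simp only [ContinuousLinearMap.coe_coe, lp.inner_eq_tsum, mulOp_apply, RCLike.inner_apply,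
    conj_trivial]
  exact tsum_congr fun n => by ring

/-- The operator `Δ - v`; the Schrödinger operator `H_V - E` is the case `v = E - V`. -/
def laplacianSub (v : ℤ →ᵇ ℝ) : Ell2 →L[ℝ] Ell2 := shiftOp 1 + shiftOp (-1) - mulOp v

lemma isSelfAdjoint_laplacianSub (v : ℤ →ᵇ ℝ) : IsSelfAdjoint (laplacianSub v) := by
  have hΔ : IsSelfAdjoint (shiftOp 1 + shiftOp (-1)) := by
    rw [isSelfAdjoint_iff, star_add, star_shiftOp, star_shiftOp, neg_neg, add_comm]
  exact hΔ.sub (isSelfAdjoint_mulOp v)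

lemma trace_transferMatrix_shiftPotential_eq_algebraMap {v : ℤ →ᵇ ℝ} {L : ℕ}
    (hv : Function.Periodic v (L : ℤ)) :
    (transferMatrix (fun i : ℕ => shiftPotential i v) L).val.trace =
      algebraMap ℝ (ℤ →ᵇ ℝ) (transferMatrix (fun i => v i) L).val.trace := by
  ext n
  let ev : (ℤ →ᵇ ℝ) →+* ℝ :=
    { toFun := fun w => w n
      map_one' := rfl
      map_mul' := fun _ _ => rfl
      map_zero' := rfl
      map_add' := fun _ _ => rfl }
  calc ev (transferMatrix (fun i : ℕ => shiftPotential i v) L).val.trace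
    _ = (Matrix.SpecialLinearGroup.map ev
          (transferMatrix (fun i : ℕ => shiftPotential i v) L)).val.trace := by
      simp [Matrix.trace_fin_two]
    _ = (transferMatrix (fun i => v (n + i)) L).val.trace := by
      rw [map_transferMatrix]
      rfl
    _ = (transferMatrix (fun i => v i) L).val.trace := trace_transferMatrix_translate hv n
    _ = algebraMap ℝ (ℤ →ᵇ ℝ) (transferMatrix (fun i => v i) L).val.trace n := by
      simp [Algebra.algebraMap_eq_smul_one]

/-- Modulo the left ideal generated by `Δ - v`, the translations `k ↦ S ^ k` solve the Schrödinger
equation with coefficients `k ↦ S ^ k v`, whose monodromy trace is a scalar. -/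
lemma exists_mul_laplacianSub_eq {v : ℤ →ᵇ ℝ} {L : ℕ} (hv : Function.Periodic v (L : ℤ)) :
    ∃ A, A * laplacianSub v =
      algebraMap ℝ (Ell2 →L[ℝ] Ell2) (transferMatrix (fun i => v i) L).val.trace -
        (shiftOp L + shiftOp (-L)) := by
  let J : Ideal (Ell2 →L[ℝ] Ell2) := Ideal.span {laplacianSub v}
  let : Module (ℤ →ᵇ ℝ) ((Ell2 →L[ℝ] Ell2) ⧸ J) := Module.compHom _ mulOp.toRingHom
  have smul_mk (w : ℤ →ᵇ ℝ) (T : Ell2 →L[ℝ] Ell2) :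
      w • Submodule.Quotient.mk (p := J) T = Submodule.Quotient.mk (mulOp w * T) := rfl
  have solution : IsSchrodingerSolution (fun k => shiftPotential k v)
      fun k => Submodule.Quotient.mk (p := J) (shiftOp k) := by
    intro k
    rw [smul_mk, ← Submodule.Quotient.mk_add, Submodule.Quotient.eq, ← shiftOp_mul_mulOp,
      sub_eq_add_neg k, ← shiftOp_mul, ← shiftOp_mul, ← mul_add, ← mul_sub]
    exact J.mul_mem_left _ (Ideal.subset_span rfl)
  have periodic : Function.Periodic (fun k => shiftPotential k v) (L : ℤ) := by
    intro k
    ext n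
    simp [← add_assoc, hv (n + k)]
  have floquet := solution.apply_period_add_apply_neg_period periodic
  rw [trace_transferMatrix_shiftPotential_eq_algebraMap hv, smul_mk, shiftOp_zero, mul_one,
    AlgHom.commutes, ← Submodule.Quotient.mk_add, eq_comm, Submodule.Quotient.eq] at floquet
  exact Ideal.mem_span_singleton'.mp floquet

lemma isUnit_algebraMap_sub_shiftOp_add_shiftOp {c : ℝ} (hc : 2 < |c|) (j k : ℤ) :
    IsUnit (algebraMap ℝ (Ell2 →L[ℝ] Ell2) c - (shiftOp j + shiftOp k)) := by
  refine spectrum.mem_resolventSet_of_norm_lt_mul (lt_of_le_of_lt ?_ hc)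
  calc ‖shiftOp j + shiftOp k‖ * ‖(1 : Ell2 →L[ℝ] Ell2)‖
    _ ≤ (1 + 1) * 1 := by
      gcongr
      · exact (norm_add_le _ _).trans (add_le_add (norm_shiftOp_le j) (norm_shiftOp_le k))
      · exact ContinuousLinearMap.norm_id_le
    _ = 2 := by norm_num

lemma isUnit_of_isSelfAdjoint_of_isUnit_mul {R : Type*} [Monoid R] [StarMul R] {a b : R}
    (ha : IsSelfAdjoint a) (h : IsUnit (b * a)) : IsUnit a := by
  obtain ⟨u, hu⟩ := h
  have left : (↑u⁻¹ * b) * a = 1 := by rw [mul_assoc, ← hu, u.inv_mul]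
  have right : a * star (↑u⁻¹ * b) = 1 := by simpa [ha.star_eq] using congrArg star left
  exact isUnit_iff_exists.mpr ⟨_, right, left_inv_eq_right_inv left right ▸ left⟩

lemma isUnit_laplacianSub {v : ℤ →ᵇ ℝ} {L : ℕ} (hv : Function.Periodic v (L : ℤ))
    (htr : 2 < |(transferMatrix (fun i => v i) L).val.trace|) : IsUnit (laplacianSub v) := by
  obtain ⟨A, hA⟩ := exists_mul_laplacianSub_eq hv
  exact isUnit_of_isSelfAdjoint_of_isUnit_mul (isSelfAdjoint_laplacianSub v)
    (hA ▸ isUnit_algebraMap_sub_shiftOp_add_shiftOp htr L (-L))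

lemma notMem_schrodingerSpectrum_of_isUnit {V : ℤ → ℝ} {E : ℝ} {v : ℤ →ᵇ ℝ}
    (hv : ∀ n, v n = E - V n) (h : IsUnit (laplacianSub v)) : E ∉ SchrodingerSpectrum V := by
  refine not_not_intro ⟨(ContinuousLinearEquiv.unitsEquiv ℝ Ell2 h.unit).toLinearEquiv, ?_⟩
  intro f n
  calc laplacianSub v f n
    _ = f (n + 1) + f (n + -1) - v n * f n := rfl
    _ = f (n - 1) + f (n + 1) + (V n - E) * f n := by
      rw [hv n, ← sub_eq_add_neg]
      ring

theorem notMem_schrodingerSpectrum_of_periodic {V : ℤ → ℝ} {E : ℝ} {L : ℕ} (hL : 0 < L)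
    (hV : V.Periodic (L : ℤ)) (htr : 2 < |(transferMatrix (fun i => E - V i) L).val.trace|) :
    E ∉ SchrodingerSpectrum V := by
  have finite_range : (Set.range fun n => E - V n).Finite := by
    refine ((Set.finite_Ico (0 : ℤ) L).image fun n => E - V n).subset ?_
    rintro _ ⟨n, rfl⟩
    have hL' : (0 : ℤ) < L := by exact_mod_cast hL
    exact ⟨n % L, ⟨n.emod_nonneg hL'.ne', n.emod_lt_of_pos hL'⟩, by simp [periodic_map_emod hV n]⟩
  obtain ⟨C, hC⟩ := finite_range.isBounded.exists_norm_le
  let v := BoundedContinuousFunction.ofNormedAddCommGroupDiscrete (fun n => E - V n) C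
    fun n => hC _ ⟨n, rfl⟩
  have hv : Function.Periodic v (L : ℤ) := fun n => congrArg (E - ·) (hV n)
  exact notMem_schrodingerSpectrum_of_isUnit (v := v) (fun _ => rfl) (isUnit_laplacianSub hv htr)

end SchrodingerOperator

section Elliptic

open Matrix
open scoped commutatorElement

lemma det_sub_one_eq {R : Type*} [CommRing R] (A : SL(2, R)) :
    (A.val - 1).det = 2 - A.val.trace := by
  have hA := A.det_coe
  rw [det_fin_two] at hA
  simp only [det_fin_two, trace_fin_two, Matrix.sub_apply, one_apply_eq, one_apply_ne, ne_eq,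
    zero_ne_one, one_ne_zero, not_false_eq_true]
  linear_combination hA

lemma trace_commutator {R : Type*} [CommRing R] (A B : SL(2, R)) :
    (⁅A, B⁆ : SL(2, R)).val.trace = 2 - (A.val * B.val - B.val * A.val).det := by
  have group_identity : ⁅A, B⁆ * (B * A) = A * B := by simp [commutatorElement_def, mul_assoc]
  have factor : A.val * B.val - B.val * A.val = ((⁅A, B⁆ : SL(2, R)).val - 1) * (B * A).val :=
    calc A.val * B.val - B.val * A.val
      _ = (⁅A, B⁆ * (B * A) : SL(2, R)).val - (B * A).val := by rw [group_identity]; rfl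
      _ = ((⁅A, B⁆ : SL(2, R)).val - 1) * (B * A).val := by
        rw [Matrix.SpecialLinearGroup.coe_mul, sub_mul, one_mul]
  rw [factor, det_mul, (B * A).det_coe, det_sub_one_eq]
  ring

section Ordered

variable {R : Type*} [CommRing R] [LinearOrder R] [IsStrictOrderedRing R]

/-- Traceless matrices carry the Lorentzian form `det`; those orthogonal to the timelike traceless
part of an elliptic matrix are spacelike. -/
lemma det_neg_of_trace_mul_eq_zero {A C : Matrix (Fin 2) (Fin 2) R} (hA : A.IsElliptic)
    (hC : C.trace = 0) (hAC : (A * C).trace = 0) (hC₀ : C ≠ 0) : C.det < 0 := by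
  have hc := hA.c_ne_zero
  rw [IsElliptic, discr_fin_two, det_fin_two, trace_fin_two] at hA
  rw [trace_fin_two, add_eq_zero_iff_neg_eq] at hC
  simp only [trace_fin_two, Matrix.mul_apply, Fin.sum_univ_two, ← hC] at hAC
  have identity : 4 * A 1 0 ^ 2 * C.det =
      ((A 0 0 + A 1 1) ^ 2 - 4 * (A 0 0 * A 1 1 - A 0 1 * A 1 0)) * C 1 0 ^ 2 -
        (2 * A 1 0 * C 0 0 - (A 0 0 - A 1 1) * C 1 0) ^ 2 := by
    rw [det_fin_two, ← hC]
    linear_combination -4 * A 1 0 * C 1 0 * hAC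
  by_contra! hdet
  have hC₁₀ : C 1 0 = 0 := by
    by_contra h
    have := mul_neg_of_neg_of_pos hA (sq_pos_of_ne_zero h)
    linarith [sq_nonneg (2 * A 1 0 * C 0 0 - (A 0 0 - A 1 1) * C 1 0),
      mul_nonneg (sq_nonneg (2 * A 1 0)) hdet]
  have hC₀₀ : C 0 0 = 0 := by
    by_contra h
    have := sq_pos_of_ne_zero (mul_ne_zero hc h)
    rw [hC₁₀] at identity
    linarith [mul_nonneg (sq_nonneg (2 * A 1 0)) hdet]
  have hC₀₁ : C 0 1 = 0 := by simpa [hC₁₀, hC₀₀, hc] using hAC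
  refine hC₀ (Matrix.ext fun i j => ?_)
  fin_cases i <;> fin_cases j <;> simp [hC₀₀, hC₀₁, hC₁₀, ← hC]

lemma two_lt_trace_commutator {A B : SL(2, R)} (hA : A.val.IsElliptic) (hAB : ¬ Commute A B) :
    2 < (⁅A, B⁆ : SL(2, R)).val.trace := by
  have orthogonal : (A.val * (A.val * B.val - B.val * A.val)).trace = 0 := by
    rw [mul_sub, trace_sub, sub_eq_zero, ← mul_assoc A.val B.val, trace_mul_comm (A.val * B.val)]
  have traceless : (A.val * B.val - B.val * A.val).trace = 0 := by
    rw [trace_sub, trace_mul_comm, sub_self]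
  have det_neg := det_neg_of_trace_mul_eq_zero hA traceless orthogonal fun h =>
    hAB (Subtype.ext (sub_eq_zero.mp h))
  rw [trace_commutator]
  linarith

end Ordered

lemma isCompact_stabilizer {G X : Type*} [Group G] [TopologicalSpace G] [TopologicalSpace X]
    [MulAction G X] [ProperSMul G X] (x : X) :
    IsCompact (MulAction.stabilizer G x : Set G) := by
  have compact := (ProperSMul.isProperMap_smul_pair (G := G) (X := X)).isCompact_preimage
    (isCompact_singleton (x := (x, x)))
  convert compact.image continuous_fst
  ext g
  simp [MulAction.mem_stabilizer_iff]

lemma inv_mem_topologicalClosure_powers {G : Type*} [Group G] [TopologicalSpace G]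
    [IsTopologicalGroup G] {K : Subgroup G} (hK : IsCompact (K : Set G)) {g : G} (hg : g ∈ K) :
    g⁻¹ ∈ (Submonoid.powers g).topologicalClosure := by
  have : CompactSpace K := isCompact_iff_compactSpace.mp hK
  let k : K := ⟨g, hg⟩
  have inv_mem : k⁻¹ ∈ closure (Set.range (k ^ · : ℕ → K)) := by
    rw [← closure_range_zpow_eq_pow]
    exact subset_closure ⟨-1, zpow_neg_one k⟩
  refine closure_mono ?_ (image_closure_subset_closure_image continuous_subtype_val
    (Set.mem_image_of_mem _ inv_mem))
  rintro _ ⟨_, ⟨n, rfl⟩, rfl⟩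
  exact ⟨n, rfl⟩

/-- An elliptic matrix fixes a point of the upper half-plane, on which `SL(2, ℝ)` acts properly. -/
lemma inv_mem_topologicalClosure_powers_of_isElliptic {A : SL(2, ℝ)} (hA : A.val.IsElliptic) :
    A⁻¹ ∈ (Submonoid.powers A).topologicalClosure := by
  let g : GL (Fin 2) ℝ := A
  have det_pos : 0 < g.val.det := by simp [g]
  have fixes : A • UpperHalfPlane.fixedPt g hA = UpperHalfPlane.fixedPt g hA :=
    (UpperHalfPlane.gl_smul_eq_self_iff_eq_fixedPt det_pos hA).mpr rfl
  exact inv_mem_topologicalClosure_powers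
    (isCompact_stabilizer (UpperHalfPlane.fixedPt g hA)) (MulAction.mem_stabilizer_iff.mpr fixes)

lemma exists_mem_two_lt_trace {S : Submonoid SL(2, ℝ)} {A B : SL(2, ℝ)} (hAS : A ∈ S)
    (hBS : B ∈ S) (hA : A.val.IsElliptic) (hB : B.val.IsElliptic) (hAB : ¬ Commute A B) :
    ∃ M ∈ S, 2 < M.val.trace := by
  have inv_mem {M : SL(2, ℝ)} (hMS : M ∈ S) (hM : M.val.IsElliptic) :
      M⁻¹ ∈ S.topologicalClosure :=
    closure_mono (Submonoid.powers_le.mpr hMS) (inv_mem_topologicalClosure_powers_of_isElliptic hM)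
  have commutator_mem : ⁅A, B⁆ ∈ S.topologicalClosure :=
    mul_mem (mul_mem (mul_mem (S.le_topologicalClosure hAS) (S.le_topologicalClosure hBS))
      (inv_mem hAS hA)) (inv_mem hBS hB)
  have isOpen : IsOpen {M : SL(2, ℝ) | 2 < M.val.trace} :=
    isOpen_lt continuous_const continuous_subtype_val.matrix_trace
  obtain ⟨M, htrace, hMS⟩ :=
    mem_closure_iff.mp commutator_mem _ isOpen (two_lt_trace_commutator hA hAB)
  exact ⟨M, hMS, htrace⟩

end Elliptic

section Genericity

open Polynomial

/-- The transfer matrix as a polynomial in a shift `X` of the energy. -/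
def polyTransferMatrix {R : Type*} [CommRing R] (t : ℕ → R) (k : ℕ) : SL(2, R[X]) :=
  transferMatrix (fun i => X + C (t i)) k

section CommRing

variable {R : Type*} [CommRing R]

@[simp]
lemma polyTransferMatrix_zero (t : ℕ → R) : polyTransferMatrix t 0 = 1 := rfl

@[simp]
lemma polyTransferMatrix_succ_zero (t : ℕ → R) (k : ℕ) (j : Fin 2) :
    polyTransferMatrix t (k + 1) 0 j =
      (X + C (t k)) * polyTransferMatrix t k 0 j - polyTransferMatrix t k 1 j :=
  transferMatrix_succ_zero _ k j

@[simp]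
lemma polyTransferMatrix_succ_one (t : ℕ → R) (k : ℕ) (j : Fin 2) :
    polyTransferMatrix t (k + 1) 1 j = polyTransferMatrix t k 0 j :=
  transferMatrix_succ_one _ k j

lemma eval_polyTransferMatrix (t : ℕ → R) (k : ℕ) (s : R) (i j : Fin 2) :
    (polyTransferMatrix t k i j).eval s = transferMatrix (fun i => s + t i) k i j := by
  have map_eq := map_transferMatrix (evalRingHom s) (fun i => X + C (t i)) k
  simp only [map_add, coe_evalRingHom, eval_X, eval_C] at map_eq
  rw [← map_eq]
  rfl

end CommRing

variable {R : Type*} [CommRing R] [IsDomain R]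

lemma degree_polyTransferMatrix_col_zero (t : ℕ → R) (k : ℕ) :
    (polyTransferMatrix t k 0 0).degree = k ∧ (polyTransferMatrix t k 1 0).degree < k := by
  induction k with
  | zero => simp
  | succ k ih =>
    have leading :
        ((X + C (t k)) * polyTransferMatrix t k 0 0).degree = ((k + 1 : ℕ) : WithBot ℕ) := by
      rw [degree_mul, degree_X_add_C, ih.1, add_comm, Nat.cast_succ]
    have lt_succ : (k : WithBot ℕ) < ((k + 1 : ℕ) : WithBot ℕ) := mod_cast k.lt_succ_self
    rw [polyTransferMatrix_succ_zero, polyTransferMatrix_succ_one, degree_sub_eq_left_of_degree_lt]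
    · exact ⟨leading, ih.1.trans_lt lt_succ⟩
    · exact leading ▸ ih.2.trans lt_succ

lemma degree_polyTransferMatrix_succ_col_one_le (t : ℕ → R) (k : ℕ) :
    (polyTransferMatrix t (k + 1) 0 1).degree ≤ k ∧
      (polyTransferMatrix t (k + 1) 1 1).degree ≤ k := by
  induction k with
  | zero => simp
  | succ k ih =>
    have le_succ : (k : WithBot ℕ) ≤ ((k + 1 : ℕ) : WithBot ℕ) := mod_cast k.le_succ
    have leading : ((X + C (t (k + 1))) * polyTransferMatrix t (k + 1) 0 1).degree ≤
        ((k + 1 : ℕ) : WithBot ℕ) := by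
      rw [degree_mul, degree_X_add_C, add_comm, Nat.cast_succ]
      exact add_le_add_left ih.1 1
    rw [polyTransferMatrix_succ_zero, polyTransferMatrix_succ_one t (k + 1)]
    exact ⟨(degree_sub_le _ _).trans (max_le leading (ih.2.trans le_succ)), ih.1.trans le_succ⟩

lemma degree_polyTransferMatrix_one_one_lt (t : ℕ → R) {k : ℕ} (hk : 0 < k) :
    (polyTransferMatrix t k 1 1).degree < (polyTransferMatrix t k 0 0).degree := by
  obtain ⟨k, rfl⟩ := Nat.exists_eq_succ_of_ne_zero hk.ne'
  rw [(degree_polyTransferMatrix_col_zero t (k + 1)).1]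
  exact (degree_polyTransferMatrix_succ_col_one_le t k).2.trans_lt (mod_cast k.lt_succ_self)

lemma discr_polyTransferMatrix_ne_zero (t : ℕ → R) {k : ℕ} (hk : 0 < k) :
    (polyTransferMatrix t k).val.discr ≠ 0 := by
  have trace_degree : (polyTransferMatrix t k).val.trace.natDegree = k := by
    rw [Matrix.trace_fin_two]
    refine natDegree_eq_of_degree_eq_some ?_
    rw [degree_add_eq_left_of_degree_lt (degree_polyTransferMatrix_one_one_lt t hk)]
    exact (degree_polyTransferMatrix_col_zero t k).1
  intro h
  rw [Matrix.discr_fin_two, (polyTransferMatrix t k).det_coe, mul_one, sub_eq_zero] at h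
  have natDegree_eq := congrArg natDegree h
  rw [natDegree_pow, trace_degree, natDegree_ofNat] at natDegree_eq
  omega

/-- For `a = A 1 0` and `b = A 0 0 - A 1 1`, this is the lower left entry of the commutator of a
matrix `A` with the transfer matrix. -/
lemma commutator_entry_polyTransferMatrix_ne_zero (t : ℕ → R) {k : ℕ} (hk : 0 < k) {a : R}
    (ha : a ≠ 0) (b : R) :
    C a * (polyTransferMatrix t k 0 0 - polyTransferMatrix t k 1 1) -
      C b * polyTransferMatrix t k 1 0 ≠ 0 := by
  obtain ⟨degree_eq, degree_lt⟩ := degree_polyTransferMatrix_col_zero t k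
  have leading :
      (C a * (polyTransferMatrix t k 0 0 - polyTransferMatrix t k 1 1)).degree = k := by
    rw [degree_C_mul ha, degree_sub_eq_left_of_degree_lt, degree_eq]
    exact degree_polyTransferMatrix_one_one_lt t hk
  intro h
  rw [sub_eq_zero] at h
  rw [h, ← smul_eq_C_mul] at leading
  exact ((degree_smul_le _ _).trans_lt degree_lt).ne leading

lemma exists_eval_ne_zero_of_infinite {F : R[X]} (hF : F ≠ 0) {U : Set R} (hU : U.Infinite) :
    ∃ s ∈ U, F.eval s ≠ 0 := by
  by_contra! h
  exact hF (eq_zero_of_infinite_isRoot F (hU.mono h))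

lemma exists_discr_ne_zero_not_commute (t : ℕ → R) {k : ℕ} (hk : 0 < k) {U : Set R}
    (hU : U.Infinite) {A : SL(2, R)} (hA : A 1 0 ≠ 0) :
    ∃ s ∈ U, (transferMatrix (fun i => s + t i) k).val.discr ≠ 0 ∧
      ¬ Commute A (transferMatrix (fun i => s + t i) k) := by
  obtain ⟨s, hs, hF⟩ := exists_eval_ne_zero_of_infinite
    (mul_ne_zero (discr_polyTransferMatrix_ne_zero t hk)
      (commutator_entry_polyTransferMatrix_ne_zero t hk hA (A 0 0 - A 1 1))) hU
  rw [eval_mul] at hF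
  have discr_ne := left_ne_zero_of_mul hF
  have entry_ne := right_ne_zero_of_mul hF
  simp only [Matrix.discr_fin_two, Matrix.trace_fin_two, (polyTransferMatrix t k).det_coe,
    eval_sub, eval_add, eval_mul, eval_pow, eval_C, eval_ofNat, eval_one, eval_polyTransferMatrix]
    at discr_ne entry_ne
  refine ⟨s, hs, ?_, fun h => entry_ne ?_⟩
  · rwa [Matrix.discr_fin_two, Matrix.trace_fin_two, Matrix.SpecialLinearGroup.det_coe]
  · have entry := congrArg (fun M : SL(2, R) => M 1 0) h.eq
    simp only [Matrix.SpecialLinearGroup.coe_mul, Matrix.mul_apply, Fin.sum_univ_two] at entry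
    linear_combination entry

lemma exists_mem_closure_two_lt_abs_trace (t : ℕ → ℝ) {k : ℕ} (hk : 0 < k) {U : Set ℝ}
    (hU : U.Infinite) :
    ∃ M ∈ Submonoid.closure ((fun s => transferMatrix (fun i => s + t i) k) '' U),
      2 < |M.val.trace| := by
  by_contra! h
  have generator_mem {s : ℝ} (hs : s ∈ U) := Submonoid.subset_closure
    (Set.mem_image_of_mem (fun s => transferMatrix (fun i => s + t i) k) hs)
  have isElliptic {s : ℝ} (hs : s ∈ U)
      (hdiscr : (transferMatrix (fun i => s + t i) k).val.discr ≠ 0) :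
      (transferMatrix (fun i => s + t i) k).val.IsElliptic := by
    refine lt_of_le_of_ne ?_ hdiscr
    rw [Matrix.discr_fin_two, Matrix.SpecialLinearGroup.det_coe]
    nlinarith [abs_le.mp (h _ (generator_mem hs))]
  obtain ⟨s₁, hs₁, discr_ne₁, -⟩ := exists_discr_ne_zero_not_commute t hk hU
    (A := stepMatrix 0) (by simp)
  have elliptic₁ := isElliptic hs₁ discr_ne₁
  obtain ⟨s₂, hs₂, discr_ne₂, not_commute⟩ :=
    exists_discr_ne_zero_not_commute t hk hU elliptic₁.c_ne_zero
  obtain ⟨M, hM, htrace⟩ := exists_mem_two_lt_trace (generator_mem hs₁) (generator_mem hs₂)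
    elliptic₁ (isElliptic hs₂ discr_ne₂) not_commute
  exact (htrace.trans_le (le_abs_self _)).not_ge (h M hM)

end Genericity

section Concatenation

lemma exists_transferMatrix_eq_of_mem_closure {R : Type*} [CommRing R] {t : ℕ → R} {p : ℕ}
    (hp : 0 < p) (ht : t.Periodic p) {U : Set R} {M : SL(2, R)}
    (hM : M ∈ Submonoid.closure ((fun s => transferMatrix (fun i => s + t i) p) '' U)) :
    ∃ (K : ℕ) (s : ℕ → R), (∀ b < K, s b ∈ U) ∧
      transferMatrix (fun i => s (i / p) + t i) (K * p) = M := by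
  induction hM using Submonoid.closure_induction_left with
  | one => exact ⟨0, 0, by simp, by simp⟩
  | mul_left _ generator _ _ ih =>
    obtain ⟨a, ha, rfl⟩ := generator
    obtain ⟨K, s, hs, rfl⟩ := ih
    refine ⟨K + 1, Function.update s K a, fun b hb => ?_, ?_⟩
    · rcases Nat.lt_succ_iff_lt_or_eq.mp hb with hb | rfl
      · rw [Function.update_of_ne hb.ne]
        exact hs b hb
      · rwa [Function.update_self]
    · rw [add_mul, one_mul, transferMatrix_add]
      congr 1 <;> refine transferMatrix_congr fun i hi => ?_
      · rw [add_comm (K * p), Nat.add_mul_div_right i K hp, Nat.div_eq_of_lt hi, zero_add,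
          Function.update_self, ← smul_eq_mul, ht.nsmul K i]
      · rw [Function.update_of_ne (Nat.div_lt_of_lt_mul (mul_comm K p ▸ hi)).ne]

lemma perExt_periodic {α : Type*} [Zero α] {m : ℕ} (w : Fin m → α) :
    (perExt w).Periodic (m : ℤ) := by
  intro j
  simp [perExt]

lemma perExt_natCast {α : Type*} [Zero α] {m : ℕ} (hm : 0 < m) (w : Fin m → α) (j : ℕ) :
    perExt w j = w ⟨j % m, Nat.mod_lt j hm⟩ :=
  dif_pos hm

lemma agg_natCast {k : ℕ} (hk : 0 < k) (x : ℤ → Fin k → ℝ) (i : ℕ) :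
    agg k x i = x (i / k : ℕ) ⟨i % k, Nat.mod_lt i hk⟩ := by
  rw [agg, dif_pos hk, ← Int.ofNat_fdiv]
  rfl

lemma agg_periodic {k m : ℕ} (hk : 0 < k) {x : ℤ → Fin k → ℝ} (hx : x.Periodic (m : ℤ)) :
    (agg k x).Periodic ((m * k : ℕ) : ℤ) := by
  intro j
  have quotient : Int.fdiv (j + m * k) k = Int.fdiv j k + m :=
    Int.add_mul_fdiv_right _ _ (by omega)
  simp only [agg, dif_pos hk, Nat.cast_mul, quotient, hx _, Int.add_mul_emod_self_right]

/-- The concatenation of the copies `x - s 0, …, x - s (K - 1)` of a word `x` over `ℝ^n`. -/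
def shiftedWord {n m : ℕ} (K : ℕ) (x : Fin m → Fin n → ℝ) (s : ℕ → ℝ) : Fin (K * m) → Fin n → ℝ :=
  fun i a => x i.modNat a - s i.divNat

variable {n m K : ℕ} (x : Fin m → Fin n → ℝ) (s : ℕ → ℝ)

lemma perExt_shiftedWord {j : ℕ} (hj : j < K * m) (a : Fin n) :
    perExt (shiftedWord K x s) j a = perExt x j a - s (j / m) := by
  have hm : 0 < m := Nat.pos_of_lt_mul_left hj
  rw [perExt_natCast (pos_of_gt hj), perExt_natCast hm]
  simp [shiftedWord, Fin.modNat, Fin.divNat, Nat.mod_eq_of_lt hj]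

lemma agg_perExt_shiftedWord {i : ℕ} (hi : i < K * (m * n)) :
    agg n (perExt (shiftedWord K x s)) i = agg n (perExt x) i - s (i / (m * n)) := by
  have hn : 0 < n := Nat.pos_of_ne_zero fun h => by simp [h] at hi
  have block_lt : i / n < K * m := Nat.div_lt_of_lt_mul (by linarith)
  rw [agg_natCast hn, agg_natCast hn, perExt_shiftedWord x s block_lt, Nat.div_div_eq_div_mul,
    mul_comm n]

lemma dist_perExt_shiftedWord_lt (hK : 0 < K) (hm : 0 < m) {ε : ℝ} (hε : 0 < ε)
    (hs : ∀ b < K, |s b| < ε) (j : ℤ) :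
    dist (perExt x j) (perExt (shiftedWord K x s) j) < ε := by
  have period_pos : 0 < K * m := by positivity
  have periodic_x : (perExt x).Periodic ((K * m : ℕ) : ℤ) := by
    simpa using (perExt_periodic x).nat_mul K
  obtain ⟨i, hi⟩ := Int.eq_ofNat_of_zero_le (Int.emod_nonneg j (b := (K * m : ℕ)) (by omega))
  have hlt : i < K * m := by
    have := Int.emod_lt_of_pos j (b := (K * m : ℕ)) (by omega)
    omega
  rw [← periodic_map_emod periodic_x, ← periodic_map_emod (perExt_periodic _) j, hi,
    dist_pi_lt_iff hε]
  intro a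
  rw [perExt_shiftedWord x s hlt, Real.dist_eq, sub_sub_cancel]
  exact hs _ (Nat.div_lt_of_lt_mul (by linarith))

end Concatenation

theorem const_word_gapRich_general (n : ℕ) (hn : 0 < n) {Y : Set (Fin n → ℝ)}
    (hY : ∀ z ∈ Y, ∀ s : ℝ, (fun i => z i - s) ∈ Y) : GapRich n Y ∅ := by
  refine ⟨fun x => by simp [AccPt], fun E _ m hm x hx ε hε => ?_⟩
  set W := agg n (perExt x)
  have periodic_W : W.Periodic ((m * n : ℕ) : ℤ) := agg_periodic hn (perExt_periodic x)
  have periodic : (fun i : ℕ => E - W i).Periodic (m * n) := fun i => by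
    simp only [Nat.cast_add, periodic_W _]
  obtain ⟨M, hM, htrace⟩ := exists_mem_closure_two_lt_abs_trace (fun i => E - W i)
    (Nat.mul_pos hm hn) (Set.Ioo_infinite (neg_lt_self hε))
  obtain ⟨K, s, hs, rfl⟩ := exists_transferMatrix_eq_of_mem_closure (Nat.mul_pos hm hn) periodic hM
  have hK : 0 < K := Nat.pos_of_ne_zero fun h => by simp [h] at htrace
  refine ⟨K * m, Nat.mul_pos hK hm, shiftedWord K x s, fun i => hY _ (hx _) _,
    dist_perExt_shiftedWord_lt x s hK hm hε fun b hb => abs_lt.mpr (hs b hb), ?_⟩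
  refine notMem_schrodingerSpectrum_of_periodic (L := K * m * n) (by positivity)
    (agg_periodic hn (perExt_periodic _)) ?_
  rwa [mul_assoc, transferMatrix_congr fun i hi => ?_]
  rw [agg_perExt_shiftedWord x s hi]
  ring

/-- For any `n ∈ ℕ`, the set `{x^{♯n} : x ∈ ℝ} ⊆ ℝ^n` of constant words is
gap-rich with empty exceptional set. -/
theorem const_word_gapRich (n : ℕ) (hn : 0 < n) :
    GapRich n {z : Fin n → ℝ | ∃ c : ℝ, ∀ i, z i = c} (∅ : Set ℝ) := by
  refine const_word_gapRich_general n hn ?_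
  rintro z ⟨c, hc⟩ s
  exact ⟨c - s, fun i => congrArg (· - s) (hc i)⟩
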